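/- For every positive integer n, the strict inequalities p_{n+1} < log₂(3/(2·θ(n))) < log₂(2/θ(n)) < p_{n+1} + 1 hold. -/

import Mathlib

/-!
Expanding `1 / (2 ^ d - 1) = ∑_{k ≥ 1} 2 ^ (-d k)` and exchanging the two sums, the inner sum
`∑_{d ∣ gcd(P, m)} μ d` detects coprimality of `m` with `P = p_n#` (`sum_moebius_dvd`), so
`theta n + 1/2 = ∑_{m ≥ 1, gcd(m, P) = 1} 2 ^ (-m)` (`hasSum_theta`). The term `m = 1` is `1/2`,
so `theta n` is the same sum over `m ≥ 2`. Put `q = p_{n+1}`. The least `m ≥ 2` coprime to `P` is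
`q` (`nth_prime_le_of_coprime`), and `q ^ 2` is another one, whence `theta n > 2 ^ (-q)`. All
the contributing `m` are odd because `2 ∣ P`, as is `q`, so they lie in `{q, q + 2, q + 4, …}` and
`theta n ≤ 2 ^ (-q) * (1 + 1/4 + 1/16 + ⋯) = (4/3) 2 ^ (-q) < (3/2) 2 ^ (-q)`. Taking logarithms
of these two bounds gives the outer inequalities, and the middle one is `3/2 < 2`.
-/

open scoped BigOperators

/-- `nthPrime k` is the k-th prime with 1-based indexing: p₁ = 2, p₂ = 3, ... -/
noncomputable def nthPrime (k : ℕ) : ℕ := Nat.nth Nat.Prime (k - 1)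

/-- `primorialN n` is `p_n# = p₁ ⬝ p₂ ⋯ p_n`, the product of the first `n` primes. -/
noncomputable def primorialN (n : ℕ) : ℕ := ∏ i ∈ Finset.range n, Nat.nth Nat.Prime i

/-- `theta n = -1/2 + ∑_{d ∣ p_n#} μ(d)/(2^d - 1)`. -/
noncomputable def theta (n : ℕ) : ℝ :=
  -1/2 + ∑ d ∈ (primorialN n).divisors,
    ((ArithmeticFunction.moebius d : ℤ) : ℝ) / (2 ^ d - 1)

/-- The Lambert expansion of `1 / (2 ^ d - 1)`: the sum of `2 ^ (-m)` over positive multiples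
`m` of `d`. -/
lemma hasSum_multiples (d : ℕ) (hd : d ≠ 0) :
    HasSum (fun m : ℕ => if m ≠ 0 ∧ d ∣ m then ((1 : ℝ) / 2) ^ m else 0)
      (1 / (2 ^ d - 1)) := by
  have hinj : Function.Injective (fun k : ℕ => d * (k + 1)) := by
    intro a b h
    have := Nat.eq_of_mul_eq_mul_left (Nat.pos_of_ne_zero hd) h
    omega
  rw [← hinj.hasSum_iff]
  · have h2 : (1 : ℝ) < 2 ^ d := one_lt_pow₀ (by norm_num) hd
    have h0 : ((1 : ℝ) / 2) ^ d < 1 := pow_lt_one₀ (by norm_num) (by norm_num) hd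
    have h := (hasSum_geometric_of_lt_one (by positivity) h0).mul_left (((1 : ℝ) / 2) ^ d)
    convert! h using 1
    · funext k
      simp [hd, pow_mul, pow_succ, mul_comm]
    · have h3 : (2 : ℝ) ^ d - 1 ≠ 0 := by linarith
      rw [one_div_pow]
      field_simp
  · intro m hm
    rw [if_neg]
    rintro ⟨h0, k, rfl⟩
    apply hm
    have hk : k ≠ 0 := by rintro rfl; simp at h0
    exact ⟨k - 1, by simp [Nat.sub_add_cancel (Nat.one_le_iff_ne_zero.2 hk)]⟩

/-- Möbius detection of coprimality: only the divisors of `gcd(P, m)` contribute. -/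
lemma sum_moebius_dvd (P m : ℕ) (hP : P ≠ 0) :
    ∑ d ∈ P.divisors, (if d ∣ m then ((ArithmeticFunction.moebius d : ℤ) : ℝ) else 0)
      = if Nat.Coprime P m then 1 else 0 := by
  rw [← Finset.sum_filter]
  have h1 : P.divisors.filter (fun d => d ∣ m) = (Nat.gcd P m).divisors := by
    ext d
    simp [Nat.dvd_gcd_iff, hP]
  have h2 := congrArg (fun f : ArithmeticFunction ℤ => f (Nat.gcd P m))
    ArithmeticFunction.coe_zeta_mul_moebius
  simp only [ArithmeticFunction.coe_zeta_mul_apply, ArithmeticFunction.one_apply] at h2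
  rw [h1, ← Int.cast_sum, h2]
  simp [Nat.Coprime]

lemma primorialN_ne_zero (n : ℕ) : primorialN n ≠ 0 :=
  Finset.prod_ne_zero_iff.2 fun i _ => (Nat.prime_nth_prime i).ne_zero

/-- `theta n + 1/2` is the sum of `2 ^ (-m)` over the positive integers `m` coprime to `p_n#`. -/
lemma hasSum_theta (n : ℕ) :
    HasSum (fun m : ℕ => if m ≠ 0 ∧ Nat.Coprime (primorialN n) m then ((1 : ℝ) / 2) ^ m else 0)
      (theta n + 1 / 2) := by
  have h := hasSum_sum (s := (primorialN n).divisors)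
    (fun d hd => (hasSum_multiples d (Nat.pos_of_mem_divisors hd).ne').mul_left
      ((ArithmeticFunction.moebius d : ℤ) : ℝ))
  convert! h using 1
  · funext m
    have h1 := sum_moebius_dvd (primorialN n) m (primorialN_ne_zero n)
    by_cases hm : m = 0
    · simp [hm]
    · have h2 : (if m ≠ 0 ∧ Nat.Coprime (primorialN n) m then ((1 : ℝ) / 2) ^ m else 0)
          = (if Nat.Coprime (primorialN n) m then 1 else 0) * ((1 : ℝ) / 2) ^ m := by
        simp [hm]
      rw [h2, ← h1, Finset.sum_mul]
      refine Finset.sum_congr rfl fun d _ => ?_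
      by_cases hd : d ∣ m <;> simp [hm, hd]
  · rw [theta]
    simp only [mul_one_div]
    ring

lemma coprime_primorialN_nth (n : ℕ) : Nat.Coprime (primorialN n) (Nat.nth Nat.Prime n) := by
  refine Nat.Coprime.prod_left fun i hi => ?_
  rw [Nat.coprime_primes (Nat.prime_nth_prime i) (Nat.prime_nth_prime n)]
  exact (Nat.nth_strictMono Nat.infinite_setOfPred_prime (Finset.mem_range.1 hi)).ne

/-- The least prime factor of `m` does not divide `p_n#`, hence is not among the first `n`
primes. -/
lemma nth_prime_le_of_coprime (n m : ℕ) (hm : 2 ≤ m) (h : Nat.Coprime (primorialN n) m) :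
    Nat.nth Nat.Prime n ≤ m := by
  have hp : m.minFac.Prime := Nat.minFac_prime (by omega)
  refine le_trans ?_ (Nat.minFac_le (by omega : 0 < m))
  by_contra hlt
  have hnth : Nat.nth Nat.Prime (Nat.count Nat.Prime m.minFac) = m.minFac := Nat.nth_count hp
  have hi : Nat.count Nat.Prime m.minFac < n := by
    rw [not_le, ← hnth] at hlt
    exact (Nat.nth_strictMono Nat.infinite_setOfPred_prime).lt_iff_lt.1 hlt
  have hdvd : m.minFac ∣ primorialN n := by
    rw [← hnth]
    exact Finset.dvd_prod_of_mem _ (Finset.mem_range.2 hi)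
  exact Nat.not_coprime_of_dvd_of_dvd hp.one_lt hdvd (Nat.minFac_dvd m) h

/-- The terms `q` and `q ^ 2` of the series, with `q = p_{n+1}`, already give strictly more than
`2 ^ (-q)`. -/
lemma theta_lower (n : ℕ) : ((1 : ℝ) / 2) ^ (Nat.nth Nat.Prime n) < theta n := by
  set q := Nat.nth Nat.Prime n with hq
  have hq2 : 2 ≤ q := (Nat.prime_nth_prime n).two_le
  have hc : Nat.Coprime (primorialN n) q := coprime_primorialN_nth n
  have hlt : q < q ^ 2 := by nlinarith
  have h := sum_le_hasSum {1, q, q ^ 2} (fun i _ => by split_ifs <;> positivity) (hasSum_theta n)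
  rw [Finset.sum_insert (by simp; omega), Finset.sum_insert (by simp; omega),
    Finset.sum_singleton, if_pos (by simp), if_pos ⟨by omega, hc⟩,
    if_pos ⟨by omega, hc.pow_right 2⟩] at h
  have : (0 : ℝ) < (1 / 2) ^ (q ^ 2) := by positivity
  linarith

/-- Comparison with the geometric series over `q, q + 2, q + 4, …`, where `q = p_{n+1}`; `0 < n`
is what makes `p_n#` even and so all contributing exponents odd. -/
lemma theta_upper (n : ℕ) (hn : 0 < n) :
    theta n ≤ 4 / 3 * ((1 : ℝ) / 2) ^ (Nat.nth Nat.Prime n) := by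
  set q := Nat.nth Nat.Prime n with hq
  have hPtwo : 2 ∣ primorialN n := by
    have := Finset.dvd_prod_of_mem (fun i => Nat.nth Nat.Prime i) (Finset.mem_range.2 hn)
    rwa [Nat.nth_prime_zero_eq_two] at this
  have hodd : ∀ m, Nat.Coprime (primorialN n) m → m % 2 = 1 := by
    intro m hm
    by_contra h
    exact Nat.not_coprime_of_dvd_of_dvd one_lt_two hPtwo (by omega) hm
  have hqodd := hodd q (coprime_primorialN_nth n)
  have hinj : Function.Injective (fun j : ℕ => q + 2 * j) := by
    intro a b h
    simp only at h
    omega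
  have hgeo : HasSum (fun j : ℕ => ((1 : ℝ) / 2) ^ (q + 2 * j)) (4 / 3 * (1 / 2) ^ q) := by
    have h := (hasSum_geometric_of_lt_one (r := (1 : ℝ) / 4) (by norm_num)
      (by norm_num)).mul_left (((1 : ℝ) / 2) ^ q)
    convert! h using 1
    · funext j
      rw [pow_add, pow_mul]
      norm_num
    · ring
  -- The majorant: the term `1/2` at `m = 1`, and the geometric series extended by zero to `ℕ`.
  have hsum := ((hasSum_extend_zero hinj).2 hgeo).add (hasSum_ite_eq (1 : ℕ) ((1 : ℝ) / 2))
  have hle := hasSum_le (fun m => ?_) (hasSum_theta n) hsum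
  · linarith
  have hext : 0 ≤ Function.extend (fun j : ℕ => q + 2 * j)
      (fun j : ℕ => ((1 : ℝ) / 2) ^ (q + 2 * j)) 0 m := by
    by_cases hm : ∃ j, q + 2 * j = m
    · obtain ⟨j, rfl⟩ := hm
      rw [hinj.extend_apply (fun j : ℕ => ((1 : ℝ) / 2) ^ (q + 2 * j)) 0 j]
      positivity
    · rw [Function.extend_apply' _ _ _ hm]
      simp
  split_ifs with hm h1 h1
  · subst h1
    norm_num at hext ⊢
    exact hext
  · have hqm := nth_prime_le_of_coprime n m (by omega) hm.2
    have hmodd := hodd m hm.2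
    obtain ⟨j, rfl⟩ : ∃ j, m = q + 2 * j := ⟨(m - q) / 2, by omega⟩
    rw [hinj.extend_apply (fun j : ℕ => ((1 : ℝ) / 2) ^ (q + 2 * j)) 0 j]
    simp
  · linarith
  · linarith

/-- For every positive integer `n`,
`p_{n+1} < log₂(3/(2⬝θ(n))) < log₂(2/θ(n)) < p_{n+1} + 1`. -/
theorem log_theta_sharp_bounds (n : ℕ) (hn : 0 < n) :
    (nthPrime (n + 1) : ℝ) < Real.logb 2 (3 / (2 * theta n)) ∧
      Real.logb 2 (3 / (2 * theta n)) < Real.logb 2 (2 / theta n) ∧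
      Real.logb 2 (2 / theta n) < (nthPrime (n + 1) : ℝ) + 1 := by
  have hlo := theta_lower n
  have hup := theta_upper n hn
  have hnq : nthPrime (n + 1) = Nat.nth Nat.Prime n := rfl
  rw [hnq]
  generalize Nat.nth Nat.Prime n = q at *
  have hq : (0 : ℝ) < (1 / 2) ^ q := by positivity
  have ht : 0 < theta n := hq.trans hlo
  have hinv : (2 : ℝ) ^ q * (1 / 2) ^ q = 1 := by
    rw [← mul_pow]
    norm_num
  have h2 : (0 : ℝ) < 2 ^ q := by positivity
  refine ⟨?_, ?_, ?_⟩
  · rw [Real.lt_logb_iff_rpow_lt (by norm_num) (by positivity), Real.rpow_natCast,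
      lt_div_iff₀ (by positivity)]
    nlinarith [mul_le_mul_of_nonneg_left hup h2.le]
  · apply Real.logb_lt_logb (by norm_num) (by positivity)
    rw [div_lt_div_iff₀ (by positivity) ht]
    linarith
  · rw [Real.logb_lt_iff_lt_rpow (by norm_num) (by positivity), ← Nat.cast_add_one,
      Real.rpow_natCast, div_lt_iff₀ ht, pow_succ]
    nlinarith [mul_lt_mul_of_pos_left hlo h2]
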